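/- arXiv:1512.07800 — 7 statements merged into one kernel-verified Lean document; each statement's English description precedes it below -/
import Mathlib

section
/- Let G be a finite connected simple graph with an edge-weight function w that is injective on the edge set of G, and let T be a spanning tree of G with vertex set V. Suppose there exists a hierarchy H for T and a candidate function χ for H such that for every F ∈ H with F ≠ V, the candidate edge χ(F) is a minimum outgoing edge of F in G. Then T is a minimum spanning tree of G. -/
/-!
The proof rests on the cut property: if `e` is a minimum outgoing edge of some vertex set `F`, then
every minimum weight spanning tree `M` of `G` contains `e`. Otherwise the path in `M` joining the
endpoints of `e` leaves `F` through some edge `f ≠ e`, which is heavier than `e` because weights are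
distinct, and replacing `f` by `e` in `M` gives a lighter spanning tree (`exists_isTree_swap`).

The candidate condition for the member `V` of the hierarchy says that every edge of `T` is the
candidate edge of some proper member, hence a minimum outgoing edge. So `T ≤ M`, and as trees are
maximal acyclic graphs, `T = M`.
-/

open scoped Classical

variable {V : Type*}

/-- The set of edges of `T` with both endpoints in `F`. -/
def edgesIn (T : SimpleGraph V) (F : Set V) : Set (Sym2 V) :=
  {e | e ∈ T.edgeSet ∧ ∀ v ∈ e, v ∈ F}

/-- An edge of `G` is outgoing from `F` if exactly one of its endpoints lies in `F`. -/
def IsOutgoing (G : SimpleGraph V) (F : Set V) (e : Sym2 V) : Prop :=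
  e ∈ G.edgeSet ∧ ∃ u v : V, e = s(u, v) ∧ u ∈ F ∧ v ∉ F

/-- A minimum outgoing edge of `F`: outgoing, of weight minimal among all outgoing edges. -/
def IsMinOutgoing (G : SimpleGraph V) (w : Sym2 V → ℝ) (F : Set V) (e : Sym2 V) : Prop :=
  IsOutgoing G F e ∧ ∀ e', IsOutgoing G F e' → w e ≤ w e'

/-- The total weight of the edges of a graph on a finite vertex type. -/
noncomputable def treeWeight [Fintype V] (w : Sym2 V → ℝ) (T : SimpleGraph V) : ℝ :=
  ∑ e ∈ T.edgeSet.toFinset, w e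

/-- `T` is a minimum spanning tree of `G`: a spanning tree whose total edge weight
is at most that of every spanning tree of `G`. -/
def IsMST [Fintype V] (G : SimpleGraph V) (w : Sym2 V → ℝ) (T : SimpleGraph V) : Prop :=
  T ≤ G ∧ T.IsTree ∧
    ∀ T' : SimpleGraph V, T' ≤ G → T'.IsTree → treeWeight w T ≤ treeWeight w T'

/-- A hierarchy for a spanning tree `T`: a laminar family of nonempty subsets of the
vertices, containing the full vertex set and all singletons, each member inducing a
connected subgraph of `T`. -/
structure IsHierarchy (T : SimpleGraph V) (H : Set (Set V)) : Prop where
  nonempty : ∀ F ∈ H, F.Nonempty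
  laminar : ∀ F ∈ H, ∀ F' ∈ H, (F ∩ F').Nonempty → F ⊆ F' ∨ F' ⊆ F
  univ_mem : Set.univ ∈ H
  singleton_mem : ∀ v : V, {v} ∈ H
  connected : ∀ F ∈ H, (T.induce F).Connected

/-- A candidate function for a hierarchy `H` for `T`: it maps each member other than
the full vertex set to an edge of `T`, and for every `F ∈ H` the set of edges of `T`
inside `F` is exactly the set of candidate edges of the members strictly contained in `F`. -/
def IsCandidateFn (T : SimpleGraph V) (H : Set (Set V)) (χ : Set V → Sym2 V) : Prop :=
  (∀ F ∈ H, F ≠ Set.univ → χ F ∈ T.edgeSet) ∧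
    ∀ F ∈ H, edgesIn T F = {e | ∃ F' ∈ H, F' ⊂ F ∧ e = χ F'}

/-- Exchange step: a tree `M` and a non-edge `uv` with `u ∈ F`, `v ∉ F` admit an edge `f` of `M`
leaving `F` such that adding `uv` and removing `f` gives a tree again. -/
lemma exists_isTree_swap [Fintype V] {M : SimpleGraph V} (hM : M.IsTree) {F : Set V} {u v : V}
    (hu : u ∈ F) (hv : v ∉ F) (huv : ¬ M.Adj u v) :
    ∃ a b, M.Adj a b ∧ a ∈ F ∧ b ∉ F ∧ ∃ M' : SimpleGraph V, M'.IsTree ∧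
      M'.edgeSet = insert s(u, v) M.edgeSet \ {s(a, b)} := by
  have hne : u ≠ v := by rintro rfl; exact hv hu
  obtain ⟨p, hp⟩ := (hM.connected u v).exists_isPath
  obtain ⟨d, hd, ha, hb⟩ := p.exists_boundary_dart F hu hv
  have hdp : s(d.fst, d.snd) ∈ p.edges := List.mem_map_of_mem (f := SimpleGraph.Dart.edge) hd
  refine ⟨d.fst, d.snd, d.adj, ha, hb,
    (M ⊔ SimpleGraph.edge u v).deleteEdges {s(d.fst, d.snd)}, ?_⟩
  have hle : M ≤ M ⊔ SimpleGraph.edge u v := le_sup_left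
  have hE : (M ⊔ SimpleGraph.edge u v).edgeSet = insert s(u, v) M.edgeSet := by
    rw [SimpleGraph.edgeSet_sup, SimpleGraph.edgeSet_edge_of_ne hne, Set.union_singleton]
  have hE' : ((M ⊔ SimpleGraph.edge u v).deleteEdges {s(d.fst, d.snd)}).edgeSet =
      insert s(u, v) M.edgeSet \ {s(d.fst, d.snd)} := by
    rw [SimpleGraph.edgeSet_deleteEdges, hE]
  refine ⟨SimpleGraph.isTree_iff_connected_and_card.2 ⟨?_, ?_⟩, hE'⟩
  · -- The path `p` and the new edge form a cycle through `d`, so `d` is not a bridge.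
    refine (hM.connected.mono hle).connected_delete_edge_of_not_isBridge fun hbr => ?_
    have hvu : (M ⊔ SimpleGraph.edge u v).Adj v u := by
      rw [← SimpleGraph.mem_edgeSet, hE, Sym2.eq_swap]; exact Set.mem_insert _ _
    have hcyc : (SimpleGraph.Walk.cons hvu (p.mapLe hle)).IsCycle := by
      rw [SimpleGraph.Walk.cons_isCycle_iff]
      refine ⟨hp.mapLe hle, fun h => huv ?_⟩
      rw [SimpleGraph.Walk.edges_mapLe_eq_edges] at h
      exact (p.adj_of_mem_edges h).symm
    refine hbr.notMem_edges_of_isCycle hcyc ?_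
    rw [SimpleGraph.Walk.edges_cons, SimpleGraph.Walk.edges_mapLe_eq_edges]
    exact List.mem_cons_of_mem _ hdp
  · rw [← (SimpleGraph.isTree_iff_connected_and_card.1 hM).2, hE']
    have h1 : s(d.fst, d.snd) ∈ M.edgeSet := d.adj
    have h2 : s(u, v) ∉ M.edgeSet := huv
    rw [Nat.card_coe_set_eq, Nat.card_coe_set_eq,
      Set.ncard_sdiff_singleton_of_mem (Set.mem_insert_of_mem _ h1),
      Set.ncard_insert_of_notMem h2, Nat.add_sub_cancel]

/-- Cut property: with distinct weights, a minimum outgoing edge of any vertex set belongs to every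
minimum spanning tree. -/
lemma IsMST.mem_of_isMinOutgoing [Fintype V] {G M : SimpleGraph V} {w : Sym2 V → ℝ}
    (hw : Set.InjOn w G.edgeSet) (hM : IsMST G w M) {F : Set V} {e : Sym2 V}
    (he : IsMinOutgoing G w F e) : e ∈ M.edgeSet := by
  obtain ⟨hMG, hMT, hopt⟩ := hM
  obtain ⟨⟨heG, u, v, rfl, hu, hv⟩, hmin⟩ := he
  by_contra hnot
  obtain ⟨a, b, hab, ha, hb, M', hM', hE⟩ := exists_isTree_swap hMT hu hv hnot
  have hfM : s(a, b) ∈ M.edgeSet := hab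
  have hfG : s(a, b) ∈ G.edgeSet := hMG hab
  have hlt : w s(u, v) < w s(a, b) := by
    refine lt_of_le_of_ne (hmin _ ⟨hfG, a, b, rfl, ha, hb⟩) fun h => hnot ?_
    rw [hw heG hfG h]
    exact hab
  have hM'G : M' ≤ G := by
    rw [← SimpleGraph.edgeSet_subset_edgeSet, hE]
    exact Set.sdiff_subset.trans
      (Set.insert_subset heG (SimpleGraph.edgeSet_subset_edgeSet.2 hMG))
  have hwt : treeWeight w M' + w s(a, b) = treeWeight w M + w s(u, v) := by
    have h1 : M'.edgeSet.toFinset = (insert s(u, v) M.edgeSet.toFinset).erase s(a, b) := by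
      ext x
      simp only [Set.mem_toFinset, hE, Set.mem_sdiff, Set.mem_insert_iff, Set.mem_singleton_iff,
        Finset.mem_erase, Finset.mem_insert]
      tauto
    unfold treeWeight
    rw [h1, Finset.sum_erase_add, Finset.sum_insert, add_comm]
    · rwa [Set.mem_toFinset]
    · exact Finset.mem_insert_of_mem (Set.mem_toFinset.2 hfM)
  have := hopt M' hM'G hM'
  linarith

lemma exists_isMST [Fintype V] {G : SimpleGraph V} (hG : G.Connected) (w : Sym2 V → ℝ) :
    ∃ M, IsMST G w M := by
  obtain ⟨M, ⟨h1, h2⟩, h3⟩ := Set.exists_min_image {M : SimpleGraph V | M ≤ G ∧ M.IsTree}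
    (treeWeight w) (Set.toFinite _) hG.exists_isTree_le
  exact ⟨M, h1, h2, fun T' h h' => h3 T' ⟨h, h'⟩⟩

/-- If a spanning tree `T` of `G` admits a hierarchy with a candidate function all of whose
candidate edges are minimum outgoing edges, then `T` is a minimum spanning tree of `G`. -/
theorem mst_of_hierarchy_candidate [Fintype V]
    (G : SimpleGraph V) (hG : G.Connected)
    (w : Sym2 V → ℝ) (hw : Set.InjOn w G.edgeSet)
    (T : SimpleGraph V) (hTG : T ≤ G) (hT : T.IsTree)
    (H : Set (Set V)) (hH : IsHierarchy T H)
    (χ : Set V → Sym2 V) (hχ : IsCandidateFn T H χ)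
    (hmin : ∀ F ∈ H, F ≠ Set.univ → IsMinOutgoing G w F (χ F)) :
    IsMST G w T := by
  obtain ⟨M, hM⟩ := exists_isMST hG w
  have := hG.nonempty
  have hTM : T ≤ M := by
    rw [← SimpleGraph.edgeSet_subset_edgeSet]
    intro e he
    have hmem : e ∈ edgesIn T Set.univ := ⟨he, fun _ _ => Set.mem_univ _⟩
    rw [hχ.2 _ hH.univ_mem] at hmem
    obtain ⟨F, hF, hlt, rfl⟩ := hmem
    exact hM.mem_of_isMinOutgoing hw (hmin F hF hlt.ne)
  have hMT : M ≤ T :=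
    (SimpleGraph.maximal_isAcyclic_iff_isTree.2 hT).le_of_ge hM.2.1.isAcyclic hTM
  rwa [le_antisymm hTM hMT]
end

section
/- Let G be a finite connected simple graph with an edge-weight function w that is injective on the edge set of G, and let T be a spanning tree of G with vertex set V. Suppose there exists a hierarchy H for T and a candidate function χ for H such that for every F ∈ H with F ≠ V, the candidate edge χ(F) is a minimum outgoing edge of F in G. Then for every F ∈ H there exists a minimum spanning tree M of G such that every edge in E_T(F) is an edge of M (every fragment of the hierarchy is a subtree of a minimum spanning tree). -/
/-!
By the cut property, every minimum spanning tree `M` contains every minimum outgoing edge `e` of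
every vertex set `F`. Otherwise the path of `M` joining the endpoints of `e` crosses the cut at some
edge `f ≠ e`, which is strictly heavier than `e` because the weights are distinct, and exchanging
`f` for `e` in `M` gives a lighter spanning tree (`IsMST.mem_of_isMinOutgoing`).

Since `V` belongs to the hierarchy, every edge of `T` is a candidate edge, hence a minimum outgoing
edge. So `T` is contained in every minimum spanning tree, and one exists as `V` is finite.
-/

open scoped Classical

variable {V : Type*}

/-- Adding an edge `s(u, v)` to a tree and deleting an edge of the path from `u` to `v` gives a tree
again: the deleted edge lies on the cycle closed by `s(u, v)`, so the result is connected, and the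
number of edges is unchanged. -/
lemma isTree_exchange [Finite V] {M : SimpleGraph V} (hM : M.IsTree) {u v x y : V} (huv : u ≠ v)
    (hadj : ¬ M.Adj u v) {p : M.Walk u v} (hp : p.IsPath) (hxy : s(x, y) ∈ p.edges) :
    ((M ⊔ SimpleGraph.edge u v).deleteEdges {s(x, y)}).IsTree := by
  have hxyM : s(x, y) ∈ M.edgeSet := p.edges_subset_edgeSet hxy
  have hnb : ¬ (M ⊔ SimpleGraph.edge u v).IsBridge s(x, y) := by
    intro hb
    have hvu : (M ⊔ SimpleGraph.edge u v).Adj v u := by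
      simp [SimpleGraph.edge_adj, huv.symm]
    have hcyc : (SimpleGraph.Walk.cons hvu (p.mapLe le_sup_left)).IsCycle := by
      rw [SimpleGraph.Walk.cons_isCycle_iff]
      refine ⟨hp.mapLe _, ?_⟩
      rw [SimpleGraph.Walk.edges_mapLe_eq_edges]
      exact fun h ↦ hadj (p.edges_subset_edgeSet h : M.Adj v u).symm
    exact hb.notMem_edges_of_isCycle hcyc (by simp [hxy])
  have hconn : (M ⊔ SimpleGraph.edge u v).Connected := hM.connected.mono le_sup_left
  refine SimpleGraph.isTree_iff_connected_and_card.2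
    ⟨hconn.connected_delete_edge_of_not_isBridge hnb, ?_⟩
  have hcard := (SimpleGraph.isTree_iff_connected_and_card.1 hM).2
  rw [← hcard, SimpleGraph.edgeSet_deleteEdges, SimpleGraph.edgeSet_sup,
    SimpleGraph.edgeSet_edge_of_ne huv, Nat.card_coe_set_eq, Nat.card_coe_set_eq,
    Set.union_singleton]
  exact congrArg (· + 1) (Set.ncard_exchange' (by simpa using hadj) hxyM)

/-- If a spanning tree `T` of `G` admits a hierarchy with a candidate function all of whose
candidate edges are minimum outgoing edges, then every fragment of the hierarchy is a
subtree of some minimum spanning tree of `G`. -/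
theorem fragment_subtree_of_mst [Fintype V]
    (G : SimpleGraph V) (hG : G.Connected)
    (w : Sym2 V → ℝ) (hw : Set.InjOn w G.edgeSet)
    (T : SimpleGraph V) (hTG : T ≤ G) (hT : T.IsTree)
    (H : Set (Set V)) (hH : IsHierarchy T H)
    (χ : Set V → Sym2 V) (hχ : IsCandidateFn T H χ)
    (hmin : ∀ F ∈ H, F ≠ Set.univ → IsMinOutgoing G w F (χ F)) :
    ∀ F ∈ H, ∃ M : SimpleGraph V, IsMST G w M ∧ edgesIn T F ⊆ M.edgeSet := by
  intro F _
  obtain ⟨M, hM⟩ := exists_isMST hG w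
  refine ⟨M, hM, fun e he ↦ ?_⟩
  have hmem : e ∈ edgesIn T Set.univ := ⟨he.1, fun _ _ ↦ trivial⟩
  rw [hχ.2 _ hH.univ_mem] at hmem
  obtain ⟨F', hF', hlt, rfl⟩ := hmem
  exact hM.mem_of_isMinOutgoing hw (hmin F' hF' hlt.ne)
end

section
/- Let T be a finite tree with vertex set V, let H be a hierarchy for T, and let χ be a map from H \ {V} to the edge set of T satisfying: (i) for every F ∈ H with F ≠ V, exactly one endpoint of χ(F) lies in F; (ii) for all F, F' ∈ H with F' ⊊ F, both endpoints of χ(F') lie in F; (iii) every edge of T equals χ(F') for some F' ∈ H with F' ≠ V. Then χ is a candidate function for H; that is, for every F ∈ H, E_T(F) = {χ(F') : F' ∈ H, F' ⊊ F}. -/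
/-!
If an edge of `T` lies inside `F`, it is `χ F'` for some `F'` by (iii). By (i) one of its
endpoints lies in both `F` and `F'`, while the other lies in `F` but not in `F'`, so laminarity
forces `F' ⊂ F`. The reverse inclusion is (ii).
-/

open scoped Classical

variable {V : Type*}

/-- A map on a hierarchy for a finite tree sending each non-total member to an edge of the
tree, such that (i) the edge of each non-total member has exactly one endpoint inside it,
(ii) the edge of a member lies inside any strictly larger member, and (iii) every tree edge
is attained, is a candidate function: for every member `F`, the edges of `T` inside `F` are
exactly the edges assigned to the members strictly contained in `F`. -/
theorem candidateFn_of_local_conditions [Fintype V]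
    (T : SimpleGraph V) (hT : T.IsTree)
    (H : Set (Set V)) (hH : IsHierarchy T H)
    (χ : Set V → Sym2 V)
    (hmap : ∀ F ∈ H, F ≠ Set.univ → χ F ∈ T.edgeSet)
    (hi : ∀ F ∈ H, F ≠ Set.univ → ∃ u v : V, χ F = s(u, v) ∧ u ∈ F ∧ v ∉ F)
    (hii : ∀ F ∈ H, ∀ F' ∈ H, F' ⊂ F → ∀ v ∈ χ F', v ∈ F)
    (hiii : ∀ e ∈ T.edgeSet, ∃ F' ∈ H, F' ≠ Set.univ ∧ e = χ F') :
    ∀ F ∈ H, edgesIn T F = {e | ∃ F' ∈ H, F' ⊂ F ∧ e = χ F'} := by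
  intro F hF
  ext e
  constructor
  · rintro ⟨he, heF⟩
    obtain ⟨F', hF', hne, rfl⟩ := hiii e he
    obtain ⟨u, v, huv, hu, hv⟩ := hi F' hF' hne
    have huF : u ∈ F := heF u (by simp [huv])
    have hvF : v ∈ F := heF v (by simp [huv])
    -- `u` makes `F` and `F'` meet, and `v` rules out `F ⊆ F'`.
    have hnot : ¬ F ⊆ F' := fun h => hv (h hvF)
    have hsub : F' ⊆ F := (hH.laminar F hF F' hF' ⟨u, huF, hu⟩).resolve_left hnot
    exact ⟨F', hF', ⟨hsub, hnot⟩, rfl⟩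
  · rintro ⟨F', hF', hlt, rfl⟩
    have hne : F' ≠ Set.univ := by
      rintro rfl
      exact hlt.2 (Set.subset_univ F)
    exact ⟨hmap F' hF' hne, hii F hF F' hF' hlt⟩
end

section
/- Let G be a finite connected simple graph with an edge-weight function w that is injective on the edge set of G, let T be a spanning tree of G with vertex set V, let H be a hierarchy for T, and let χ be a map from H \ {V} to the edge set of T satisfying: (i) for every F ∈ H with F ≠ V, exactly one endpoint of χ(F) lies in F; (ii) for all F, F' ∈ H with F' ⊊ F, both endpoints of χ(F') lie in F; (iii) every edge of T equals χ(F') for some F' ∈ H with F' ≠ V; and (iv) for every F ∈ H with F ≠ V, χ(F) is a minimum outgoing edge of F in G. Then T is a minimum spanning tree of G. -/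
/-!
By (iii) and (iv) every edge of `T` is a minimum outgoing edge of some vertex set, so the cut
property applies. Let `S` be a spanning tree of least weight, and suppose some edge `e` of `T`,
minimum for the cut around `F`, is not in `S`. The path of `S` joining the endpoints of `e`
crosses that cut along an edge `f ≠ e`, and `w e < w f` since `w` is injective. Exchanging `f`
for `e` turns `S` into a lighter spanning tree (`exists_exchange`), a contradiction. Hence
`T ≤ S`, and as trees are minimal connected graphs, `T = S`.
-/

open scoped Classical

variable {V : Type*}

/-- Tree exchange across a cut: if `s(a, b)` crosses the cut around `F` and is not an edge of the
tree `S`, then it can replace some edge `f` of `S` crossing the same cut. The removed `f` lies on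
the cycle closed by `s(a, b)`, so connectedness survives, and the edge count is unchanged. -/
theorem exists_exchange [Fintype V] {S : SimpleGraph V} (hS : S.IsTree) {F : Set V} {a b : V}
    (ha : a ∈ F) (hb : b ∉ F) (hab : ¬ S.Adj a b) :
    ∃ f, IsOutgoing S F f ∧ ∃ S' : SimpleGraph V, S'.IsTree ∧
      S'.edgeSet.toFinset = insert s(a, b) (S.edgeSet.toFinset.erase f) := by
  have hne : a ≠ b := fun h => hb (h ▸ ha)
  obtain ⟨p, hp⟩ := hS.connected.exists_isPath a b
  obtain ⟨d, hd, hx, hy⟩ := p.exists_boundary_dart F ha hb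
  obtain ⟨⟨x, y⟩, hxy⟩ := d
  replace hxy : S.Adj x y := hxy
  have hf : s(x, y) ∈ p.edges := List.mem_map_of_mem hd
  have hfe : s(x, y) ≠ s(a, b) := fun h =>
    hab ((SimpleGraph.mem_edgeSet S).1 (h ▸ (SimpleGraph.mem_edgeSet S).2 hxy))
  refine ⟨s(x, y), ⟨hxy, x, y, rfl, hx, hy⟩,
    (S ⊔ SimpleGraph.edge a b).deleteEdges {s(x, y)}, ?_⟩
  have hE : ((S ⊔ SimpleGraph.edge a b).deleteEdges {s(x, y)}).edgeSet.toFinset =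
      insert s(a, b) (S.edgeSet.toFinset.erase s(x, y)) := by
    ext e
    simp only [Set.mem_toFinset, SimpleGraph.edgeSet_deleteEdges, SimpleGraph.edgeSet_sup,
      SimpleGraph.edgeSet_edge_of_ne hne, Set.mem_sdiff, Set.mem_union, Set.mem_singleton_iff,
      Finset.mem_insert, Finset.mem_erase]
    grind
  refine ⟨SimpleGraph.isTree_iff_connected_and_card.2 ⟨?_, ?_⟩, by convert hE⟩
  · refine (hS.connected.mono le_sup_left).connected_delete_edge_of_not_isBridge fun hbr => ?_
    have hba : (S ⊔ SimpleGraph.edge a b).Adj b a := by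
      simp [SimpleGraph.edge_adj, hne, hne.symm]
    have hcyc : (SimpleGraph.Walk.cons hba (p.mapLe le_sup_left)).IsCycle := by
      refine (SimpleGraph.Walk.cons_isCycle_iff _ _).2 ⟨hp.mapLe _, fun h => ?_⟩
      rw [SimpleGraph.Walk.edges_mapLe_eq_edges] at h
      exact hab (p.adj_of_mem_edges h).symm
    refine hbr.notMem_edges_of_isCycle hcyc ?_
    simp [hf]
  · rw [← (SimpleGraph.isTree_iff_connected_and_card.1 hS).2, Nat.card_eq_card_toFinset,
      Nat.card_eq_card_toFinset, hE, Finset.card_insert_of_notMem (by simp [hab]),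
      Finset.card_erase_add_one (by simpa using hxy)]

/-- If a spanning tree `T` of a weighted connected graph `G` admits a hierarchy `H` and a map
`χ` into the edges of `T` such that (i) the edge of each non-total member has exactly one
endpoint inside it, (ii) the edge of a member lies inside any strictly larger member,
(iii) every tree edge is attained, and (iv) each assigned edge is a minimum outgoing edge of
its member, then `T` is a minimum spanning tree of `G`. -/
theorem mst_of_local_conditions [Fintype V]
    (G : SimpleGraph V) (hG : G.Connected)
    (w : Sym2 V → ℝ) (hw : Set.InjOn w G.edgeSet)
    (T : SimpleGraph V) (hTG : T ≤ G) (hT : T.IsTree)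
    (H : Set (Set V)) (hH : IsHierarchy T H)
    (χ : Set V → Sym2 V)
    (hmap : ∀ F ∈ H, F ≠ Set.univ → χ F ∈ T.edgeSet)
    (hi : ∀ F ∈ H, F ≠ Set.univ → ∃ u v : V, χ F = s(u, v) ∧ u ∈ F ∧ v ∉ F)
    (hii : ∀ F ∈ H, ∀ F' ∈ H, F' ⊂ F → ∀ v ∈ χ F', v ∈ F)
    (hiii : ∀ e ∈ T.edgeSet, ∃ F' ∈ H, F' ≠ Set.univ ∧ e = χ F')
    (hiv : ∀ F ∈ H, F ≠ Set.univ → IsMinOutgoing G w F (χ F)) :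
    IsMST G w T := by
  refine ⟨hTG, hT, ?_⟩
  obtain ⟨S, ⟨hSG, hS⟩, hmin⟩ := Set.exists_min_image
    {S : SimpleGraph V | S ≤ G ∧ S.IsTree} (treeWeight w) (Set.toFinite _) ⟨T, hTG, hT⟩
  suffices hTS : T ≤ S by
    have hST : S ≤ T :=
      (SimpleGraph.isTree_iff_minimal_connected.1 hS).le_of_le hT.connected hTS
    rw [le_antisymm hTS hST]
    exact fun T' hT'G hT' => hmin T' ⟨hT'G, hT'⟩
  rw [← SimpleGraph.edgeSet_subset_edgeSet]
  intro e he
  by_contra heS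
  obtain ⟨F, hF, hFu, rfl⟩ := hiii e he
  obtain ⟨⟨heG, a, b, hab, ha, hb⟩, hle⟩ := hiv F hF hFu
  rw [hab] at heS heG hle
  obtain ⟨f, ⟨hfS, hfout⟩, S', hS', hE⟩ := exists_exchange hS ha hb heS
  have hfG : f ∈ G.edgeSet := SimpleGraph.edgeSet_mono hSG hfS
  have hlt : w s(a, b) < w f :=
    lt_of_le_of_ne (hle f ⟨hfG, hfout⟩) fun h => heS (hw heG hfG h ▸ hfS)
  have hS'G : S' ≤ G := by
    rw [← SimpleGraph.edgeSet_subset_edgeSet]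
    intro e' he'
    rw [← Set.mem_toFinset, hE, Finset.mem_insert, Finset.mem_erase, Set.mem_toFinset] at he'
    rcases he' with rfl | he'
    · exact heG
    · exact SimpleGraph.edgeSet_mono hSG he'.2
  have hwS' := hmin S' ⟨hS'G, hS'⟩
  have hsum := Finset.add_sum_erase S.edgeSet.toFinset w (Set.mem_toFinset.2 hfS)
  unfold treeWeight at hwS'
  rw [hE, Finset.sum_insert (fun h => heS (Set.mem_toFinset.1 (Finset.mem_erase.1 h).2))] at hwS'
  linarith
end

section
/- Let V be a finite nonempty set, let H be a hierarchy on V, and let k be a positive integer with k ≤ |V|. Then the red and blue members of H are pairwise disjoint, and their union is V; i.e., the collection of red and blue members of H forms a partition of V. -/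
/-!
By laminarity, members of `H` that form an antichain under inclusion are pairwise disjoint, so
disjointness reduces to showing that no coloured (red or blue) `F` lies strictly inside a coloured
`G` (`coloured_eq_of_subset`). A coloured `G` containing a top member is itself top, hence red,
hence equal to that member by minimality. If `F` is red this gives `F = G` at once. If `F` is blue
with parent `P`, laminarity and the absence of members strictly between `F` and `P` force `P ⊆ G`,
so `P = G` would be red, contradicting the choice of `P`.

For covering, let `P` be a minimal top member containing `v`. If `P` is not red, it is not `{v}`,
so there is a maximal member of `H` containing `v` and strictly inside `P`; it is blue
(`exists_coloured_mem`).
-/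

variable {V : Type*}

/-- A hierarchy on a set: a laminar family of nonempty subsets containing the full
set and all singletons. -/
structure IsSetHierarchy (H : Set (Set V)) : Prop where
  nonempty : ∀ F ∈ H, F.Nonempty
  laminar : ∀ F ∈ H, ∀ F' ∈ H, (F ∩ F').Nonempty → F ⊆ F' ∨ F' ⊆ F
  univ_mem : Set.univ ∈ H
  singleton_mem : ∀ v : V, {v} ∈ H

/-- The top fragments: members of `H` with at least `k` elements. -/
def TopFrag (H : Set (Set V)) (k : ℕ) : Set (Set V) := {F ∈ H | k ≤ F.ncard}

/-- A red fragment: a minimal member of `TopFrag H k` with respect to inclusion. -/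
def Red (H : Set (Set V)) (k : ℕ) (F : Set V) : Prop :=
  F ∈ TopFrag H k ∧ ∀ F' ∈ TopFrag H k, F' ⊆ F → F' = F

/-- A blue fragment: a member of `H` not in `TopFrag H k` having a non-red top fragment `P`
strictly containing it with no member of `H` strictly between them. -/
def Blue (H : Set (Set V)) (k : ℕ) (F : Set V) : Prop :=
  F ∈ H ∧ F ∉ TopFrag H k ∧
    ∃ P ∈ TopFrag H k, ¬ Red H k P ∧ F ⊂ P ∧ ¬ ∃ Q ∈ H, F ⊂ Q ∧ Q ⊂ P

theorem TopFrag.mono [Finite V] {H : Set (Set V)} {k : ℕ} {F G : Set V}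
    (hF : F ∈ TopFrag H k) (hG : G ∈ H) (h : F ⊆ G) : G ∈ TopFrag H k :=
  ⟨hG, hF.2.trans (Set.ncard_le_ncard h (Set.toFinite G))⟩

/-- Red and blue members form an antichain. -/
theorem coloured_eq_of_subset [Finite V] {H : Set (Set V)} (hH : IsSetHierarchy H) {k : ℕ}
    {F G : Set V} (hF : Red H k F ∨ Blue H k F) (hG : Red H k G ∨ Blue H k G) (h : F ⊆ G) :
    F = G := by
  have hGH : G ∈ H := by
    rcases hG with hG | hG
    · exact hG.1.1
    · exact hG.1
  -- A coloured superset of a top member is top, hence red, hence equal to it.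
  have key : ∀ P ∈ TopFrag H k, P ⊆ G → Red H k G ∧ P = G := by
    intro P hP hPG
    rcases hG with hG | hG
    · exact ⟨hG, hG.2 P hP hPG⟩
    · exact absurd (TopFrag.mono hP hGH hPG) hG.2.1
  rcases hF with hF | ⟨hFH, -, P, hP, hPred, hFP, hcov⟩
  · exact (key F hF.1 h).2
  · by_contra hne
    have hFG : F ⊂ G := h.ssubset_of_ne hne
    have hmeet : (P ∩ G).Nonempty := (hH.nonempty F hFH).mono (Set.subset_inter hFP.subset h)
    have hPG : P ⊆ G := by
      rcases hH.laminar P hP.1 G hGH hmeet with h1 | h1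
      · exact h1
      · by_contra h2
        exact hcov ⟨G, hGH, hFG, h1, h2⟩
    obtain ⟨hGred, rfl⟩ := key P hP hPG
    exact hPred hGred

/-- Every point lies in a red or blue member. -/
theorem exists_coloured_mem [Fintype V] {H : Set (Set V)} (hH : IsSetHierarchy H) {k : ℕ}
    (hkV : k ≤ Fintype.card V) (v : V) : ∃ F, (Red H k F ∨ Blue H k F) ∧ v ∈ F := by
  have huniv : Set.univ ∈ TopFrag H k :=
    ⟨hH.univ_mem, by rwa [Set.ncard_univ, Nat.card_eq_fintype_card]⟩
  obtain ⟨P, hPmin⟩ := (Set.toFinite {P | P ∈ TopFrag H k ∧ v ∈ P}).exists_minimal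
    ⟨Set.univ, huniv, Set.mem_univ v⟩
  obtain ⟨hP, hvP⟩ := hPmin.prop
  by_cases hred : Red H k P
  · exact ⟨P, Or.inl hred, hvP⟩
  have hvP' : {v} ⊂ P := by
    refine (Set.singleton_subset_iff.2 hvP).ssubset_of_ne ?_
    rintro rfl
    exact hred ⟨hP, fun F' hF' hsub => (hH.nonempty F' hF'.1).subset_singleton_iff.1 hsub⟩
  obtain ⟨F, hFmax⟩ := (Set.toFinite {F | F ∈ H ∧ v ∈ F ∧ F ⊂ P}).exists_maximal
    ⟨{v}, hH.singleton_mem v, Set.mem_singleton v, hvP'⟩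
  obtain ⟨hFH, hvF, hFP⟩ := hFmax.prop
  refine ⟨F, Or.inr ⟨hFH, fun hF => ?_, P, hP, hred, hFP, ?_⟩, hvF⟩
  · exact hFP.2 (hPmin.le_of_le ⟨hF, hvF⟩ hFP.1)
  · rintro ⟨Q, hQ, hFQ, hQP⟩
    exact hFQ.2 (hFmax.le_of_ge ⟨hQ, hFQ.1 hvF, hQP⟩ hFQ.1)

/-- The red and blue fragments of a hierarchy form a partition of the ground set. -/
theorem red_blue_partition [Fintype V] [Nonempty V]
    (H : Set (Set V)) (hH : IsSetHierarchy H)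
    (k : ℕ) (hk : 0 < k) (hkV : k ≤ Fintype.card V) :
    (∀ F F' : Set V, (Red H k F ∨ Blue H k F) → (Red H k F' ∨ Blue H k F') →
      F ≠ F' → F ∩ F' = ∅) ∧
    ⋃₀ {F : Set V | Red H k F ∨ Blue H k F} = Set.univ := by
  constructor
  · intro F F' hF hF' hne
    by_contra h
    have hmem : ∀ G, Red H k G ∨ Blue H k G → G ∈ H := by
      rintro G (hG | hG)
      · exact hG.1.1
      · exact hG.1
    rcases hH.laminar F (hmem F hF) F' (hmem F' hF') (Set.nonempty_iff_ne_empty.2 h) with h1 | h1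
    · exact hne (coloured_eq_of_subset hH hF hF' h1)
    · exact hne (coloured_eq_of_subset hH hF' hF h1).symm
  · exact Set.eq_univ_of_forall fun v => exists_coloured_mem hH hkV v
end

section
/- Let V be a finite nonempty set, let H be a hierarchy on V, and let k be a positive integer with k ≤ |V|. Then every F ∈ Top contains at least one red member of H, and F is exactly the union of the red members of H contained in F together with the blue members of H contained in F (F contains no additional elements). -/
/-!
Given `x` in a top fragment `F`, take an inclusion-minimal top fragment `P` with `x ∈ P ⊆ F`.
Either `P` is red, or a maximal member `M` of `H` with `x ∈ M ⊂ P` exists; `M` is not a top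
fragment by minimality of `P` and has `P` as its parent by its own maximality, so it is blue.
Such an `M` exists because `{x} ⊂ P`: a non-red `P` properly contains a nonempty top fragment.
-/

variable {V : Type*}

/-- Every top fragment contains a red fragment, and is exactly the union of the red and
blue fragments contained in it. -/
theorem top_fragment_union_red_blue [Fintype V] [Nonempty V]
    (H : Set (Set V)) (hH : IsSetHierarchy H)
    (k : ℕ) (hk : 0 < k) (hkV : k ≤ Fintype.card V) :
    ∀ F ∈ TopFrag H k,
      (∃ R : Set V, Red H k R ∧ R ⊆ F) ∧
      F = ⋃₀ {F' : Set V | (Red H k F' ∨ Blue H k F') ∧ F' ⊆ F} := by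
  intro F hF
  refine ⟨?_, subset_antisymm ?_ (Set.sUnion_subset fun F' h => h.2)⟩
  · obtain ⟨R, hRF, hR⟩ := (Set.toFinite (TopFrag H k)).exists_le_minimal hF
    exact ⟨R, ⟨hR.prop, fun F' hF' h => hR.eq_of_le hF' h⟩, hRF⟩
  · intro x hx
    obtain ⟨P, hPF, hP⟩ :=
      (Set.toFinite {P | P ∈ TopFrag H k ∧ x ∈ P}).exists_le_minimal ⟨hF, hx⟩
    obtain ⟨hPT, hxP⟩ := hP.prop
    by_cases hred : Red H k P
    · exact ⟨P, ⟨Or.inl hred, hPF⟩, hxP⟩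
    have hxne : {x} ⊂ P := by
      refine (Set.singleton_subset_iff.2 hxP).ssubset_of_ne ?_
      rintro rfl
      exact hred ⟨hPT, fun F' hF' h => (hH.nonempty F' hF'.1).subset_singleton_iff.1 h⟩
    obtain ⟨M, hxM, hM⟩ :=
      (Set.toFinite {M | M ∈ H ∧ M ⊂ P}).exists_le_maximal ⟨hH.singleton_mem x, hxne⟩
    have hxM' : x ∈ M := hxM rfl
    obtain ⟨hMH, hMP⟩ := hM.prop
    refine ⟨M, ⟨Or.inr ⟨hMH, fun hMT => ?_, P, hPT, hred, hMP, ?_⟩, hMP.subset.trans hPF⟩, hxM'⟩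
    · exact hMP.ne (hP.eq_of_le ⟨hMT, hxM'⟩ hMP.subset)
    · rintro ⟨Q, hQ, hMQ, hQP⟩
      exact hMQ.ne (hM.eq_of_le ⟨hQ, hQP⟩ hMQ.subset)
end

section
/- Let φ be a positive integer and let d : ℕ → ℕ → ℕ satisfy: (A1) for all x with 1 ≤ x ≤ φ, d 0 x ≤ x − 1; (A2) for all t ∈ ℕ and all x with 1 ≤ x ≤ φ, d (t+1) x ≤ d t x; (A3) for all t ≥ 1 and all x, i with 3 ≤ i ≤ x ≤ φ, if d (t−1) (x−1) ≤ i − 3 and d t x ≤ i − 1, then d (t+1) x ≤ i − 2; (A4) for all t ∈ ℕ and all x with 2 ≤ x ≤ φ, if d t (x−1) = 0 and d (t+2) x ≤ 1, then d (t+3) x = 0. Then for all integers i, x, t with 1 ≤ i ≤ x ≤ φ and t ≥ 3x − i, we have d t x ≤ i − 1. In particular, d t x = 0 for every t ≥ 3x − 1. -/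
/-!
The bound is proved at the critical phase `t = 3x − i`; (A2) carries it to all later phases.
The induction is on the piece `x`, and for fixed `x` downwards on `i`, from `i = x` to `i = 1`.

* For `i = x` the bound is (A1) together with (A2).
* For `2 ≤ i < x`, apply (A3) at phase `3x − i − 1 = 3x − (i + 1)`: the bound for `(i + 1, x)` says
  that piece `x` is within distance `i`, and the bound for `(i − 1, x − 1)`, whose critical phase
  is `3(x − 1) − (i − 1) = 3x − i − 2`, says that the preceding piece is two steps further ahead.
* For `i = 1 < x`, apply (A4) from phase `3(x − 1) − 1 = 3x − 4`, where piece `x − 1` has been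
  absorbed; two phases later, at `3x − 2`, piece `x` is within distance `1` by the bound for
  `(2, x)`.
-/

/-- The pipelining lemma for the train convergecast: if `d t x` denotes the least distance
from the root of a node holding piece `x` at phase `t`, and the four progress properties
(A1)–(A4) hold, then `d t x ≤ i − 1` whenever `1 ≤ i ≤ x ≤ φ` and `t ≥ 3x − i`;
in particular the root has absorbed piece `x` (i.e. `d t x = 0`) once `t ≥ 3x − 1`. -/
theorem train_pipelining (φ : ℕ) (hφ : 0 < φ) (d : ℕ → ℕ → ℕ)
    (hA1 : ∀ x, 1 ≤ x → x ≤ φ → d 0 x ≤ x - 1)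
    (hA2 : ∀ t x, 1 ≤ x → x ≤ φ → d (t + 1) x ≤ d t x)
    (hA3 : ∀ t, 1 ≤ t → ∀ x i, 3 ≤ i → i ≤ x → x ≤ φ →
      d (t - 1) (x - 1) ≤ i - 3 → d t x ≤ i - 1 → d (t + 1) x ≤ i - 2)
    (hA4 : ∀ t x, 2 ≤ x → x ≤ φ → d t (x - 1) = 0 → d (t + 2) x ≤ 1 → d (t + 3) x = 0) :
    (∀ i x t, 1 ≤ i → i ≤ x → x ≤ φ → 3 * x - i ≤ t → d t x ≤ i - 1) ∧
    (∀ x t, 1 ≤ x → x ≤ φ → 3 * x - 1 ≤ t → d t x = 0) := by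
  have mono : ∀ x, 1 ≤ x → x ≤ φ → Antitone fun t => d t x := fun x h1 hx =>
    antitone_nat_of_succ_le fun t => hA2 t x h1 hx
  have key : ∀ x i t, 1 ≤ i → i ≤ x → x ≤ φ → 3 * x - i ≤ t → d t x ≤ i - 1 := by
    intro x
    induction x with
    | zero => intro i t h1 hi; omega
    | succ y ihy =>
      -- The downward induction on `i` is run as an upward one on `k = (y + 1) - i`.
      have aux : ∀ k i t, i + k = y + 1 → 1 ≤ i → y + 1 ≤ φ → 3 * (y + 1) - i ≤ t →
          d t (y + 1) ≤ i - 1 := by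
        intro k
        induction k with
        | zero =>
          intro i t hik h1 hx _
          obtain rfl : i = y + 1 := by omega
          exact (mono (y + 1) h1 hx (Nat.zero_le t)).trans (hA1 (y + 1) h1 hx)
        | succ k ihk =>
          intro i t hik h1 hx ht
          refine (mono (y + 1) (by omega) hx ht).trans ?_
          rcases Nat.eq_or_lt_of_le h1 with rfl | h2
          · have hprev : d (3 * y - 1) y = 0 :=
              Nat.le_zero.mp (ihy 1 (3 * y - 1) le_rfl (by omega) (by omega) le_rfl)
            have hcur : d (3 * y - 1 + 2) (y + 1) ≤ 1 :=
              ihk 2 (3 * y - 1 + 2) (by omega) (by omega) hx (by omega)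
            have h := hA4 (3 * y - 1) (y + 1) (by omega) hx hprev hcur
            rw [show 3 * y - 1 + 3 = 3 * (y + 1) - 1 by omega] at h
            exact h.le
          · have hprev : d (3 * (y + 1) - (i + 1) - 1) y ≤ i - 1 - 1 :=
              ihy (i - 1) _ (by omega) (by omega) (by omega) (by omega)
            have hcur : d (3 * (y + 1) - (i + 1)) (y + 1) ≤ i + 1 - 1 :=
              ihk (i + 1) _ (by omega) (by omega) hx le_rfl
            have h := hA3 (3 * (y + 1) - (i + 1)) (by omega) (y + 1) (i + 1) (by omega)
              (by omega) hx (hprev.trans (by omega)) hcur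
            rw [show 3 * (y + 1) - (i + 1) + 1 = 3 * (y + 1) - i by omega] at h
            exact h.trans (by omega)
      intro i t h1 hi hx ht
      exact aux (y + 1 - i) i t (by omega) h1 hx ht
  exact ⟨fun i x t => key x i t,
    fun x t h1 hx ht => Nat.le_zero.mp (key x 1 t le_rfl h1 hx ht)⟩
end
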